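/- Let M be an 8×8 complex matrix (indexed by ((Fin 2) × (Fin 2)) × (Fin 2) via iterated Kronecker products). Suppose M is Hermitian, M anticommutes with both kinetic matrices Γ₁ = σx ⊗ σ0 ⊗ σz and Γ₂ = σz ⊗ σz ⊗ σz, M commutes with both symmetry matrices S₁ = σ0 ⊗ σz ⊗ σ0 and S₂ = σx ⊗ σx ⊗ σ0, and M satisfies the time-reversal invariance condition (σ0 ⊗ σ0 ⊗ σy) * M̄ * (σ0 ⊗ σ0 ⊗ σy) = M, where M̄ denotes the entrywise complex conjugate of M. Then there exists a real number m such that M = m • (σy ⊗ σz ⊗ σz). Conversely, every real multiple of σy ⊗ σz ⊗ σz satisfies all of these conditions. (This is the statement that the symmetric mass term of the π-flux Majorana Dirac Hamiltonian in symmetry class DIII is unique up to a real scalar.) -/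

import Mathlib

open Matrix Complex

/-- The 2×2 identity Pauli matrix σ0. -/
noncomputable def σ0 : Matrix (Fin 2) (Fin 2) ℂ := !![1, 0; 0, 1]
/-- The Pauli matrix σx. -/
noncomputable def σx : Matrix (Fin 2) (Fin 2) ℂ := !![0, 1; 1, 0]
/-- The Pauli matrix σy. -/
noncomputable def σy : Matrix (Fin 2) (Fin 2) ℂ := !![0, -I; I, 0]
/-- The Pauli matrix σz. -/
noncomputable def σz : Matrix (Fin 2) (Fin 2) ℂ := !![1, 0; 0, -1]

/-- Kronecker product of two 2×2 complex matrices. -/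
noncomputable def kron (A B : Matrix (Fin 2) (Fin 2) ℂ) :
    Matrix (Fin 2 × Fin 2) (Fin 2 × Fin 2) ℂ :=
  Matrix.kroneckerMap (· * ·) A B

/-- Iterated Kronecker product of three 2×2 complex matrices, an 8×8 matrix. -/
noncomputable def kron3 (A B C : Matrix (Fin 2) (Fin 2) ℂ) :
    Matrix ((Fin 2 × Fin 2) × Fin 2) ((Fin 2 × Fin 2) × Fin 2) ℂ :=
  Matrix.kroneckerMap (· * ·) (kron A B) C

/-- The entries of `M * (A ⊗ B ⊗ C)`. -/
theorem mul_kron3_apply (M : Matrix ((Fin 2 × Fin 2) × Fin 2) ((Fin 2 × Fin 2) × Fin 2) ℂ)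
    (A B C : Matrix (Fin 2) (Fin 2) ℂ) (i : (Fin 2 × Fin 2) × Fin 2) (a b c : Fin 2) :
    (M * kron3 A B C) i ((a, b), c) =
      ∑ x, ∑ y, ∑ z, M i ((x, y), z) * (A x a * B y b * C z c) := by
  simp only [Matrix.mul_apply, Fintype.sum_prod_type, kron3, kron, kroneckerMap_apply]

/-- The entries of `(A ⊗ B ⊗ C) * M`. -/
theorem kron3_mul_apply (M : Matrix ((Fin 2 × Fin 2) × Fin 2) ((Fin 2 × Fin 2) × Fin 2) ℂ)
    (A B C : Matrix (Fin 2) (Fin 2) ℂ) (j : (Fin 2 × Fin 2) × Fin 2) (a b c : Fin 2) :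
    (kron3 A B C * M) ((a, b), c) j =
      ∑ x, ∑ y, ∑ z, (A a x * B b y * C c z) * M ((x, y), z) j := by
  simp only [Matrix.mul_apply, Fintype.sum_prod_type, kron3, kron, kroneckerMap_apply]

/-- Kronecker products multiply factor by factor. -/
theorem kron3_mul_kron3 (A B C A' B' C' : Matrix (Fin 2) (Fin 2) ℂ) :
    kron3 A B C * kron3 A' B' C' = kron3 (A * A') (B * B') (C * C') := by
  simp only [kron3, kron, mul_kronecker_mul]

/-- The conjugate transpose of a Kronecker product is taken factor by factor. -/
theorem conjTranspose_kron3 (A B C : Matrix (Fin 2) (Fin 2) ℂ) :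
    (kron3 A B C)ᴴ = kron3 Aᴴ Bᴴ Cᴴ := by
  simp only [kron3, kron, conjTranspose_kronecker]

/-- The complex conjugate of a Kronecker product is taken factor by factor. -/
theorem map_conj_kron3 (A B C : Matrix (Fin 2) (Fin 2) ℂ) :
    (kron3 A B C).map (starRingEnd ℂ) =
      kron3 (A.map (starRingEnd ℂ)) (B.map (starRingEnd ℂ)) (C.map (starRingEnd ℂ)) := by
  ext
  simp only [kron3, kron, map_apply, kroneckerMap_apply, map_mul]

theorem map_conj_σy : σy.map (starRingEnd ℂ) = !![0, I; -I, 0] := by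
  ext i j
  fin_cases i <;> fin_cases j <;> simp [σy]

theorem map_conj_σz : σz.map (starRingEnd ℂ) = σz := by
  ext i j
  fin_cases i <;> fin_cases j <;> simp [σz]

section Entries

variable {M : Matrix ((Fin 2 × Fin 2) × Fin 2) ((Fin 2 × Fin 2) × Fin 2) ℂ}

theorem apply_eq_zero_of_commute_σ0_σz_σ0 (h : M * kron3 σ0 σz σ0 = kron3 σ0 σz σ0 * M)
    (a c a' c' : Fin 2) {b b' : Fin 2} (hb : b ≠ b') : M ((a, b), c) ((a', b'), c') = 0 := by
  have h := congr_fun₂ h ((a, b), c) ((a', b'), c')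
  rw [mul_kron3_apply, kron3_mul_apply] at h
  fin_cases b <;> fin_cases b' <;> simp at hb <;> fin_cases a <;> fin_cases c <;>
    fin_cases a' <;> fin_cases c' <;> simpa [σ0, σz, self_eq_neg, neg_eq_self] using h

theorem apply_eq_zero_of_anticommute_σz_σz_σz
    (h : M * kron3 σz σz σz = -(kron3 σz σz σz * M))
    (b : Fin 2) {a c a' c' : Fin 2} (hac : a = a' ↔ c = c') :
    M ((a, b), c) ((a', b), c') = 0 := by
  have h := congr_fun₂ h ((a, b), c) ((a', b), c')
  rw [Matrix.neg_apply, mul_kron3_apply, kron3_mul_apply] at h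
  fin_cases a <;> fin_cases a' <;> fin_cases c <;> fin_cases c' <;> simp at hac <;>
    fin_cases b <;> simpa [σz, self_eq_neg, neg_eq_self] using h

theorem apply_swap_of_anticommute_σx_σ0_σz
    (h : M * kron3 σx σ0 σz = -(kron3 σx σ0 σz * M)) (b c : Fin 2) :
    M ((0, b), c) ((1, b), c) = -M ((1, b), c) ((0, b), c) := by
  have h := congr_fun₂ h ((0, b), c) ((0, b), c)
  rw [Matrix.neg_apply, mul_kron3_apply, kron3_mul_apply] at h
  fin_cases b <;> fin_cases c <;> simpa [σx, σ0, σz, neg_eq_iff_eq_neg] using h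

theorem apply_swap_of_commute_σx_σx_σ0
    (h : M * kron3 σx σx σ0 = kron3 σx σx σ0 * M) (c : Fin 2) :
    M ((1, 1), c) ((0, 1), c) = M ((0, 0), c) ((1, 0), c) := by
  have h := congr_fun₂ h ((1, 1), c) ((1, 0), c)
  rw [mul_kron3_apply, kron3_mul_apply] at h
  fin_cases c <;> simpa [σx, σ0] using h

theorem apply_of_timeReversal
    (h : kron3 σ0 σ0 σy * M.map (starRingEnd ℂ) * kron3 σ0 σ0 σy = M) (a b a' b' c c' : Fin 2) :
    M ((a, b), c) ((a', b'), c') = (if c = c' then 1 else -1) *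
      starRingEnd ℂ (M ((a, b), c + 1) ((a', b'), c' + 1)) := by
  have h := congr_fun₂ h ((a, b), c) ((a', b'), c')
  simp only [mul_kron3_apply, kron3_mul_apply] at h
  rw [← h]
  fin_cases c <;> fin_cases c' <;> fin_cases a <;> fin_cases b <;> fin_cases a' <;>
    fin_cases b' <;> simp [σ0, σy, mul_comm _ I, ← mul_assoc]

end Entries

/-- The symmetric mass term of the π-flux Majorana Dirac Hamiltonian in symmetry
class DIII is unique up to a real scalar: a Hermitian 8×8 matrix `M` that
anticommutes with the kinetic matrices σx⊗σ0⊗σz and σz⊗σz⊗σz, commutes with the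
magnetic translation matrices σ0⊗σz⊗σ0 and σx⊗σx⊗σ0, and is time-reversal
invariant, (σ0⊗σ0⊗σy)·M̄·(σ0⊗σ0⊗σy) = M, is exactly a real multiple of σy⊗σz⊗σz. -/
theorem class_DIII_mass_term_unique
    (M : Matrix ((Fin 2 × Fin 2) × Fin 2) ((Fin 2 × Fin 2) × Fin 2) ℂ) :
    (M.IsHermitian ∧
      M * kron3 σx σ0 σz = -(kron3 σx σ0 σz * M) ∧
      M * kron3 σz σz σz = -(kron3 σz σz σz * M) ∧
      M * kron3 σ0 σz σ0 = kron3 σ0 σz σ0 * M ∧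
      M * kron3 σx σx σ0 = kron3 σx σx σ0 * M ∧
      kron3 σ0 σ0 σy * M.map (starRingEnd ℂ) * kron3 σ0 σ0 σy = M) ↔
    ∃ m : ℝ, M = (m : ℂ) • kron3 σy σz σz := by
  constructor
  · rintro ⟨hherm, hΓ₁, hΓ₂, hS₁, hS₂, hT⟩
    have hflip := apply_swap_of_anticommute_σx_σ0_σz hΓ₁
    have hconj : starRingEnd ℂ (M ((1, 0), 0) ((0, 0), 0)) = -M ((1, 0), 0) ((0, 0), 0) :=
      (hherm.apply ((0, 0), 0) ((1, 0), 0)).trans (hflip 0 0)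
    have hx : M ((1, 0), 0) ((0, 0), 0) = (M ((1, 0), 0) ((0, 0), 0)).im * I := by
      have h := congr_arg re hconj
      simp only [conj_re, neg_re] at h
      apply Complex.ext <;> simp
      linarith
    refine ⟨(M ((1, 0), 0) ((0, 0), 0)).im, ?_⟩
    generalize (M ((1, 0), 0) ((0, 0), 0)).im = m at hx
    have hlower : ∀ b c, M ((1, b), c) ((0, b), c) = m * I * (σz b b * σz c c) := by
      have hc : ∀ b, M ((1, b), 1) ((0, b), 1) = starRingEnd ℂ (M ((1, b), 0) ((0, b), 0)) :=
        fun b => by simpa using apply_of_timeReversal hT 1 b 0 b 1 1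
      have hb : M ((1, 1), 0) ((0, 1), 0) = -(m * I) := by
        rw [apply_swap_of_commute_σx_σx_σ0 hS₂, hflip, hx]
      simp [Fin.forall_fin_two, hc, hb, hx, σz]
    have hoff : ∀ a b c c', c ≠ c' → M ((a, b), c) ((a, b), c') = 0 := by
      intro a b c c' hcc
      have h := apply_of_timeReversal hT a b a b c c'
      have hadd : c + 1 = c' ∧ c' + 1 = c := by omega
      rw [if_neg hcc, hadd.1, hadd.2, starRingEnd_apply, hherm.apply, neg_one_mul] at h
      exact self_eq_neg.mp h
    ext ⟨⟨a, b⟩, c⟩ ⟨⟨a', b'⟩, c'⟩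
    rcases ne_or_eq b b' with hb | rfl
    · rw [apply_eq_zero_of_commute_σ0_σz_σ0 hS₁ _ _ _ _ hb]
      fin_cases b <;> fin_cases b' <;> simp [kron3, kron, σz] at hb ⊢
    by_cases hac : a = a' ↔ c = c'
    · rw [apply_eq_zero_of_anticommute_σz_σz_σz hΓ₂ _ hac]
      fin_cases a <;> fin_cases a' <;> fin_cases c <;> fin_cases c' <;>
        simp [kron3, kron, σy, σz] at hac ⊢
    rcases ne_or_eq c c' with hc | rfl
    · obtain rfl : a = a' := by tauto
      rw [hoff _ _ _ _ hc]
      fin_cases a <;> simp [kron3, kron, σy]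
    fin_cases a <;> fin_cases a' <;> simp at hac <;>
      simp [hflip, hlower, kron3, kron, σy] <;> ring
  · rintro ⟨m, rfl⟩
    have hmap : (((m : ℂ) • kron3 σy σz σz).map (starRingEnd ℂ)) =
        (m : ℂ) • (kron3 σy σz σz).map (starRingEnd ℂ) := by
      ext
      simp
    simp only [IsHermitian, conjTranspose_smul, conjTranspose_kron3, hmap, map_conj_kron3,
      map_conj_σy, map_conj_σz, smul_mul_assoc, mul_smul_comm, kron3_mul_kron3, ← smul_neg,
      RCLike.star_def, conj_ofReal]
    refine ⟨?_, ?_, ?_, ?_, ?_, ?_⟩ <;> congr 1 <;>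
      simp [← Matrix.ext_iff, Fin.forall_fin_two, kron3, kron, σ0, σx, σy, σz]
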